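/- Let R = k[x^d, x^e y^ℓ, x^f y^m, y^n] with d,n>0, e,f,ℓ,m ≥ 0, (e,ℓ) ≠ (0,0). Then dim_k R/(x^d,y^n) ≥ |H|, where H is the subgroup of (ℤ/dℤ)⊕(ℤ/nℤ) generated by (e,ℓ),(f,m). Equivalently, the |H| monomials x^{ae+bf} y^{aℓ+bm} for (a,b) ∈ B_0 are linearly independent in R/(x^d,y^n). -/

import Mathlib

open MvPolynomial

set_option synthInstance.maxHeartbeats 1000000
set_option maxHeartbeats 2000000

/-- Exponents of monomials of `R`. -/
def InS (d n e f l m : ℕ) (s : Fin 2 →₀ ℕ) : Prop :=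
  ∃ a b i j : ℕ, s 0 = a * e + b * f + i * d ∧ s 1 = a * l + b * m + j * n

lemma mono_eq {k : Type*} [Field k] (p q : ℕ) :
    (X 0 ^ p * X 1 ^ q : MvPolynomial (Fin 2) k) =
      monomial (Finsupp.single 0 p + Finsupp.single 1 q) 1 := by
  rw [X_pow_eq_monomial, X_pow_eq_monomial, monomial_mul, one_mul]

lemma InS_gen {k : Type*} [Field k] {d n e f l m p q : ℕ}
    (h : ∃ a b i j : ℕ, p = a * e + b * f + i * d ∧ q = a * l + b * m + j * n)
    {s : Fin 2 →₀ ℕ} (hs : s ∈ (X 0 ^ p * X 1 ^ q : MvPolynomial (Fin 2) k).support) :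
    InS d n e f l m s := by
  rw [mono_eq] at hs
  have := support_monomial_subset hs
  rw [Finset.mem_singleton] at this
  subst this
  obtain ⟨a, b, i, j, h1, h2⟩ := h
  exact ⟨a, b, i, j, by simpa using h1, by simpa using h2⟩

lemma support_InS {k : Type*} [Field k] {d n e f l m : ℕ} {p : MvPolynomial (Fin 2) k}
    (hp : p ∈ Algebra.adjoin k ({X 0 ^ d, X 0 ^ e * X 1 ^ l, X 0 ^ f * X 1 ^ m, X 1 ^ n} :
        Set (MvPolynomial (Fin 2) k))) :
    ∀ s ∈ p.support, InS d n e f l m s := by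
  classical
  induction hp using Algebra.adjoin_induction with
  | mem x hx =>
    intro s hs
    rcases hx with rfl | rfl | rfl | rfl
    · refine InS_gen (k := k) (p := d) (q := 0) ⟨0, 0, 1, 0, by simp, by simp⟩ (by simpa using hs)
    · exact InS_gen (k := k) ⟨1, 0, 0, 0, by simp, by simp⟩ hs
    · exact InS_gen (k := k) ⟨0, 1, 0, 0, by simp, by simp⟩ hs
    · refine InS_gen (k := k) (p := 0) (q := n) ⟨0, 0, 0, 1, by simp, by simp⟩ (by simpa using hs)
  | algebraMap c =>
    intro s hs
    rw [algebraMap_eq, C_apply] at hs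
    have := support_monomial_subset hs
    rw [Finset.mem_singleton] at this
    subst this
    exact ⟨0, 0, 0, 0, by simp, by simp⟩
  | add x y _ _ hx hy =>
    intro s hs
    rcases Finset.mem_union.1 (support_add hs) with h | h
    · exact hx s h
    · exact hy s h
  | mul x y _ _ hx hy =>
    intro s hs
    obtain ⟨s1, h1, s2, h2, rfl⟩ := Finset.mem_add.1 (support_mul x y hs)
    obtain ⟨a, b, i, j, p1, p2⟩ := hx s1 h1
    obtain ⟨a', b', i', j', p1', p2'⟩ := hy s2 h2
    exact ⟨a + a', b + b', i + i', j + j', by rw [Finsupp.add_apply, p1, p1']; ring,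
      by rw [Finsupp.add_apply, p2, p2']; ring⟩

/-- Independence criterion for monomials in the quotient. -/
lemma indep {k : Type*} [Field k] {d n e f l m : ℕ}
    (R : Subalgebra k (MvPolynomial (Fin 2) k))
    (hR : R = Algebra.adjoin k
      ({X 0 ^ d, X 0 ^ e * X 1 ^ l, X 0 ^ f * X 1 ^ m, X 1 ^ n} :
        Set (MvPolynomial (Fin 2) k)))
    (xd yn : R)
    (hxd : (xd : MvPolynomial (Fin 2) k) = X 0 ^ d)
    (hyn : (yn : MvPolynomial (Fin 2) k) = X 1 ^ n)
    {ι : Type*} (r : ι → R) (w : ι → (Fin 2 →₀ ℕ)) (hw : Function.Injective w)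
    (hr : ∀ i, (r i : MvPolynomial (Fin 2) k) = monomial (w i) 1)
    (h1 : ∀ i s, InS d n e f l m s → w i ≠ s + Finsupp.single 0 d)
    (h2 : ∀ i s, InS d n e f l m s → w i ≠ s + Finsupp.single 1 n) :
    LinearIndependent k (fun i => Ideal.Quotient.mk (Ideal.span {xd, yn} : Ideal R) (r i)) := by
  classical
  rw [linearIndependent_iff']
  intro t c hc j hj
  have e1 : Ideal.Quotient.mk (Ideal.span {xd, yn} : Ideal R) (∑ i ∈ t, c i • r i) = 0 := by
    rw [map_sum, ← hc]
    refine Finset.sum_congr rfl fun i _ => ?_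
    rfl
  rw [Ideal.Quotient.eq_zero_iff_mem, Ideal.mem_span_pair] at e1
  obtain ⟨a, b, hab⟩ := e1
  have e2 := congrArg (fun z : R => coeff (w j) (z : MvPolynomial (Fin 2) k)) hab
  have e3 : coeff (w j) ((∑ i ∈ t, c i • r i : R) : MvPolynomial (Fin 2) k) = c j := by
    rw [AddSubmonoidClass.coe_finsetSum, coeff_sum]
    rw [Finset.sum_eq_single j]
    · simp [hr]
    · intro i _ hij
      have : w i ≠ w j := fun h => hij (hw h)
      simp [hr, this]
    · intro h; exact absurd hj h
  have e4 : coeff (w j) ((a * xd + b * yn : R) : MvPolynomial (Fin 2) k) = 0 := by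
    by_contra hne
    have hmem := mem_support_iff.2 hne
    rw [AddMemClass.coe_add, MulMemClass.coe_mul, MulMemClass.coe_mul, hxd, hyn] at hmem
    rcases Finset.mem_union.1 (support_add hmem) with h | h
    · obtain ⟨s1, q1, s2, q2, q⟩ := Finset.mem_add.1 (support_mul _ _ h)
      rw [X_pow_eq_monomial] at q2
      have := support_monomial_subset q2
      rw [Finset.mem_singleton] at this
      subst this
      exact h1 j s1 (support_InS (hR ▸ a.2) s1 q1) q.symm
    · obtain ⟨s1, q1, s2, q2, q⟩ := Finset.mem_add.1 (support_mul _ _ h)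
      rw [X_pow_eq_monomial] at q2
      have := support_monomial_subset q2
      rw [Finset.mem_singleton] at this
      subst this
      exact h2 j s1 (support_InS (hR ▸ b.2) s1 q1) q.symm
  exact e3.symm.trans (e2.symm.trans e4)

lemma fin_quot_aux {k : Type*} [Field k] {d n e f l m : ℕ} (hd : 0 < d) (hn : 0 < n)
    (R : Subalgebra k (MvPolynomial (Fin 2) k))
    (hR : R = Algebra.adjoin k
      ({X 0 ^ d, X 0 ^ e * X 1 ^ l, X 0 ^ f * X 1 ^ m, X 1 ^ n} :
        Set (MvPolynomial (Fin 2) k)))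
    (xd yn : R)
    (hxd : (xd : MvPolynomial (Fin 2) k) = X 0 ^ d)
    (hyn : (yn : MvPolynomial (Fin 2) k) = X 1 ^ n)
    (Q : Type*) [CommRing Q] [Algebra k Q] (φ : R →ₐ[k] Q) (hφ : Function.Surjective φ)
    (hx0 : φ xd = 0) (hy0 : φ yn = 0) :
    Module.Finite k Q := by
  classical
  have hft : Algebra.FiniteType k R := by
    rw [← Subalgebra.fg_iff_finiteType, hR]
    exact Subalgebra.fg_def.2 ⟨_, by simp, rfl⟩
  have hft2 : Algebra.FiniteType k Q := hft.of_surjective φ hφ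
  have zx : IsIntegral k (φ xd) := by
    rw [hx0]
    exact isIntegral_zero
  have zy : IsIntegral k (φ yn) := by
    rw [hy0]
    exact isIntegral_zero
  have gen : ∀ (z : R) (p q : ℕ), (z : MvPolynomial (Fin 2) k) = X 0 ^ p * X 1 ^ q →
      IsIntegral k (φ z) := by
    intro z p q hz
    refine IsIntegral.of_pow (n := d * n) (Nat.mul_pos hd hn) ?_
    have : z ^ (d * n) = xd ^ (p * n) * yn ^ (q * d) := by
      apply Subtype.ext
      rw [SubmonoidClass.coe_pow, MulMemClass.coe_mul, SubmonoidClass.coe_pow,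
        SubmonoidClass.coe_pow, hz, hxd, hyn]
      ring
    rw [← map_pow, this, map_mul, map_pow, map_pow]
    exact (zx.pow _).mul (zy.pow _)
  have key : ∀ (p : MvPolynomial (Fin 2) k) (hp : p ∈ Algebra.adjoin k
      ({X 0 ^ d, X 0 ^ e * X 1 ^ l, X 0 ^ f * X 1 ^ m, X 1 ^ n} :
        Set (MvPolynomial (Fin 2) k))), IsIntegral k (φ ⟨p, hR ▸ hp⟩) := by
    intro p hp
    induction hp using Algebra.adjoin_induction with
    | mem x hx =>
      rcases hx with rfl | rfl | rfl | rfl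
      · exact gen _ d 0 (by simp)
      · exact gen _ _ _ rfl
      · exact gen _ _ _ rfl
      · exact gen _ 0 n (by simp)
    | algebraMap c =>
      have : φ (algebraMap k R c) = algebraMap k Q c := φ.commutes c
      exact this ▸ isIntegral_algebraMap (R := k) (A := Q) (x := c)
    | add x y hx' hy' hx hy =>
      have := hx.add hy
      rw [← map_add] at this
      exact this
    | mul x y _ _ hx hy =>
      have := hx.mul hy
      rw [← map_mul] at this
      exact this
  have hint : Algebra.IsIntegral k Q := by
    constructor
    intro z
    obtain ⟨⟨p, hp⟩, rfl⟩ := hφ z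
    exact key p (hR ▸ hp)
  exact Algebra.IsIntegral.finite

lemma fin_quot {k : Type*} [Field k] {d n e f l m : ℕ} (hd : 0 < d) (hn : 0 < n)
    (R : Subalgebra k (MvPolynomial (Fin 2) k))
    (hR : R = Algebra.adjoin k
      ({X 0 ^ d, X 0 ^ e * X 1 ^ l, X 0 ^ f * X 1 ^ m, X 1 ^ n} :
        Set (MvPolynomial (Fin 2) k)))
    (xd yn : R)
    (hxd : (xd : MvPolynomial (Fin 2) k) = X 0 ^ d)
    (hyn : (yn : MvPolynomial (Fin 2) k) = X 1 ^ n) :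
    Module.Finite k (R ⧸ (Ideal.span {xd, yn} : Ideal R)) := by
  generalize hI : (Ideal.span {xd, yn} : Ideal R) = I
  have h1 : xd ∈ I := hI ▸ Ideal.subset_span (by simp)
  have h2 : yn ∈ I := hI ▸ Ideal.subset_span (by simp)
  have e1 : Ideal.Quotient.mkₐ k I xd = 0 := Ideal.Quotient.eq_zero_iff_mem.2 h1
  have e2 : Ideal.Quotient.mkₐ k I yn = 0 := Ideal.Quotient.eq_zero_iff_mem.2 h2
  have h := fin_quot_aux hd hn R hR xd yn hxd hyn (R ⧸ I) (Ideal.Quotient.mkₐ k I)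
    (Ideal.Quotient.mkₐ_surjective k I) e1 e2
  exact h

lemma ord_dvd {d n e l : ℕ} :
    (d : ℤ) ∣ (addOrderOf (((e : ZMod d), (l : ZMod n)) : ZMod d × ZMod n) : ℤ) * e ∧
    (n : ℤ) ∣ (addOrderOf (((e : ZMod d), (l : ZMod n)) : ZMod d × ZMod n) : ℤ) * l := by
  have h := addOrderOf_nsmul_eq_zero (((e : ZMod d), (l : ZMod n)) : ZMod d × ZMod n)
  set o := addOrderOf (((e : ZMod d), (l : ZMod n)) : ZMod d × ZMod n)
  have h1 := congrArg Prod.fst h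
  have h2 := congrArg Prod.snd h
  simp only [Prod.smul_fst, Prod.smul_snd, nsmul_eq_mul, Prod.fst_zero, Prod.snd_zero] at h1 h2
  constructor
  · rw [← ZMod.intCast_zmod_eq_zero_iff_dvd]; push_cast; assumption
  · rw [← ZMod.intCast_zmod_eq_zero_iff_dvd]; push_cast; assumption

lemma ord_pos {d n : ℕ} (hd : 0 < d) (hn : 0 < n) (x : ZMod d × ZMod n) : 0 < addOrderOf x := by
  have : NeZero d := ⟨hd.ne'⟩
  have : NeZero n := ⟨hn.ne'⟩
  exact addOrderOf_pos x

/-- Reduction of the subtracted coefficient modulo the order, for nonnegative relations. -/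
lemma reduce {d n e f l m : ℕ} (hd : 0 < d) (hn : 0 < n) (α β : ℕ)
    (h1 : (d : ℤ) ∣ (α : ℤ) * e - β * f) (h2 : (n : ℤ) ∣ (α : ℤ) * l - β * m) :
    ∃ β' : ℕ, β' < addOrderOf (((f : ZMod d), (m : ZMod n)) : ZMod d × ZMod n) ∧
      (d : ℤ) ∣ (α : ℤ) * e - β' * f ∧ (n : ℤ) ∣ (α : ℤ) * l - β' * m ∧
      (α : ℤ) * e - β * f ≤ (α : ℤ) * e - β' * f ∧
      (α : ℤ) * l - β * m ≤ (α : ℤ) * l - β' * m := by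
  obtain ⟨o1, o2⟩ := ord_dvd (d := d) (n := n) (e := f) (l := m)
  have opos := ord_pos hd hn (((f : ZMod d), (m : ZMod n)) : ZMod d × ZMod n)
  set o := addOrderOf (((f : ZMod d), (m : ZMod n)) : ZMod d × ZMod n)
  have hdm : (β : ℤ) = (β % o : ℕ) + o * (β / o : ℕ) := by
    exact_mod_cast (Nat.mod_add_div β o).symm
  have t0 : (0 : ℤ) ≤ (o : ℤ) * (β / o : ℕ) := by positivity
  refine ⟨β % o, Nat.mod_lt _ opos, ?_, ?_, ?_, ?_⟩
  · have : (α : ℤ) * e - (β % o : ℕ) * f = (α * e - β * f) + (o * f) * (β / o : ℕ) := by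
      rw [hdm]; push_cast; ring
    rw [this]; exact dvd_add h1 (Dvd.dvd.mul_right o1 _)
  · have : (α : ℤ) * l - (β % o : ℕ) * m = (α * l - β * m) + (o * m) * (β / o : ℕ) := by
      rw [hdm]; push_cast; ring
    rw [this]; exact dvd_add h2 (Dvd.dvd.mul_right o2 _)
  · have : ((β % o : ℕ) : ℤ) * f ≤ β * f := by
      apply mul_le_mul_of_nonneg_right _ (by positivity)
      linarith
    linarith
  · have : ((β % o : ℕ) : ℤ) * m ≤ β * m := by
      apply mul_le_mul_of_nonneg_right _ (by positivity)
      linarith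
    linarith

/-- The combinatorial core. -/
lemma comb (d n e f l m : ℕ) (hd : 0 < d) (hn : 0 < n) (hel : (e, l) ≠ (0, 0))
    (a2 b2 a3 b3 : ℕ) (g2 h2 g3 h3 : ℤ)
    (hrel2x : -(a2 : ℤ) * e + b2 * f = g2) (hrel2y : -(a2 : ℤ) * l + b2 * m = h2)
    (hdvd2 : (d : ℤ) ∣ g2 ∧ (n : ℤ) ∣ h2)
    (hmin2 : ∀ b' : ℕ, 0 < b' →
      (∃ (a' : ℕ) (g h : ℤ), a' < addOrderOf (((e : ZMod d), (l : ZMod n)) : ZMod d × ZMod n) ∧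
        -(a' : ℤ) * e + b' * f = g ∧ -(a' : ℤ) * l + b' * m = h ∧
        (d : ℤ) ∣ g ∧ (n : ℤ) ∣ h ∧ (0 < g ∨ 0 < h ∨ (g = 0 ∧ h = 0))) → b2 ≤ b')
    (hrel3x : (a3 : ℤ) * e - b3 * f = g3) (hrel3y : (a3 : ℤ) * l - b3 * m = h3)
    (hdvd3 : (d : ℤ) ∣ g3 ∧ (n : ℤ) ∣ h3)
    (hmin3 : ∀ a' : ℕ, 0 < a' →
      (∃ (b' : ℕ) (g h : ℤ), b' < addOrderOf (((f : ZMod d), (m : ZMod n)) : ZMod d × ZMod n) ∧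
        (a' : ℤ) * e - b' * f = g ∧ (a' : ℤ) * l - b' * m = h ∧
        (d : ℤ) ∣ g ∧ (n : ℤ) ∣ h ∧ 0 ≤ g ∧ 0 ≤ h ∧ ¬(g = 0 ∧ h = 0)) → a3 ≤ a')
    (a b a' b' : ℕ) (g h : ℤ)
    (hB : (a < a3 - a2 ∧ b < b2) ∨ (a < a3 ∧ b < b2 - b3))
    (hx : (a : ℤ) * e + b * f = a' * e + b' * f + g)
    (hy : (a : ℤ) * l + b * m = a' * l + b' * m + h)
    (hg : (d : ℤ) ∣ g) (hh : (n : ℤ) ∣ h) (hg0 : 0 ≤ g) (hh0 : 0 ≤ h)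
    (hne : ¬ (g = 0 ∧ h = 0) ∨ (b' < b2 ∧ (a, b) ≠ (a', b'))) : False := by
  have hel' : 0 < e ∨ 0 < l := by
    by_contra hc
    push Not at hc
    exact hel (by ext <;> simp <;> omega)
  have ha3 : a < a3 := by omega
  have hb2 : b < b2 := by omega
  obtain ⟨oe1, oe2⟩ := ord_dvd (d := d) (n := n) (e := e) (l := l)
  have oepos := ord_pos hd hn (((e : ZMod d), (l : ZMod n)) : ZMod d × ZMod n)
  -- `a₃` is at most the order of `(e,ℓ)`
  have ha3o : a3 ≤ addOrderOf (((e : ZMod d), (l : ZMod n)) : ZMod d × ZMod n) := by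
    refine hmin3 _ oepos ⟨0, _, _, ord_pos hd hn _, rfl, rfl, by simpa using oe1,
      by simpa using oe2, ?_, ?_, ?_⟩
    · simp only [Nat.cast_zero, zero_mul, sub_zero]; positivity
    · simp only [Nat.cast_zero, zero_mul, sub_zero]; positivity
    · simp only [Nat.cast_zero, zero_mul, sub_zero]
      rintro ⟨p, q⟩
      rcases hel' with h | h
      · have : 0 < (addOrderOf (((e : ZMod d), (l : ZMod n)) : ZMod d × ZMod n) : ℤ) * e := by
          positivity
        omega
      · have : 0 < (addOrderOf (((e : ZMod d), (l : ZMod n)) : ZMod d × ZMod n) : ℤ) * l := by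
          positivity
        omega
  have M3 : ∀ α β : ℕ, 0 < α → α < a3 → (d : ℤ) ∣ (α : ℤ) * e - β * f →
      (n : ℤ) ∣ (α : ℤ) * l - β * m → 0 ≤ (α : ℤ) * e - β * f → 0 ≤ (α : ℤ) * l - β * m →
      ¬ ((α : ℤ) * e - β * f = 0 ∧ (α : ℤ) * l - β * m = 0) → False := by
    intro α β p1 p2 q1 q2 q3 q4 q5
    obtain ⟨β', r1, r2, r3, r4, r5⟩ := reduce hd hn α β q1 q2
    have := hmin3 α p1 ⟨β', _, _, r1, rfl, rfl, r2, r3, by omega, by omega, by omega⟩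
    omega
  have M2 : ∀ β α : ℕ, 0 < β → β < b2 →
      α < addOrderOf (((e : ZMod d), (l : ZMod n)) : ZMod d × ZMod n) →
      (d : ℤ) ∣ (β : ℤ) * f - α * e →
      (n : ℤ) ∣ (β : ℤ) * m - α * l → (0 < (β : ℤ) * f - α * e ∨ 0 < (β : ℤ) * m - α * l ∨
      ((β : ℤ) * f - α * e = 0 ∧ (β : ℤ) * m - α * l = 0)) → False := by
    intro β α p1 p2 p3 q1 q2 q3
    have := hmin2 β p1 ⟨α, _, _, p3, by ring, by ring, q1, q2, q3⟩
    omega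
  -- no relation with both coefficients in the interior ranges
  have M23 : ∀ α β : ℕ, 0 < α → α < a3 → 0 < β → β < b2 → (d : ℤ) ∣ (α : ℤ) * e - β * f →
      (n : ℤ) ∣ (α : ℤ) * l - β * m → False := by
    intro α β p1 p2 p3 p4 q1 q2
    by_cases hs : 0 < (β : ℤ) * f - α * e ∨ 0 < (β : ℤ) * m - α * l ∨
      ((β : ℤ) * f - α * e = 0 ∧ (β : ℤ) * m - α * l = 0)
    · refine M2 β α p3 p4 (by omega) ?_ ?_ hs
      · rw [← neg_sub]; exact (dvd_neg).2 q1
      · rw [← neg_sub]; exact (dvd_neg).2 q2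
    · exact M3 α β p1 p2 q1 q2 (by omega) (by omega) (by omega)
  rcases le_or_gt a a' with haa | haa
  · rcases le_or_gt b b' with hbb | hbb
    · obtain ⟨α, rfl⟩ := Nat.exists_eq_add_of_le haa
      obtain ⟨β, rfl⟩ := Nat.exists_eq_add_of_le hbb
      push_cast at hx hy
      have t1 : (0 : ℤ) ≤ (α : ℤ) * e := by positivity
      have t2 : (0 : ℤ) ≤ (β : ℤ) * f := by positivity
      have t3 : (0 : ℤ) ≤ (α : ℤ) * l := by positivity
      have t4 : (0 : ℤ) ≤ (β : ℤ) * m := by positivity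
      have x0 : (α : ℤ) * e + β * f + g = 0 := by linarith
      have y0 : (α : ℤ) * l + β * m + h = 0 := by linarith
      rcases hne with hne | ⟨hb', hne⟩
      · omega
      · have hα : α = 0 := by
          by_contra hc
          have hc' : 0 < α := Nat.pos_of_ne_zero hc
          rcases hel' with hp | hp
          · have : (0 : ℤ) < (α : ℤ) * e := by positivity
            omega
          · have : (0 : ℤ) < (α : ℤ) * l := by positivity
            omega
        subst hα
        have hβ : 0 < β := by
          rcases Nat.eq_zero_or_pos β with rfl | hp
          · simp at hne
          · exact hp
        have bf : (β : ℤ) * f = 0 := by omega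
        have bm : (β : ℤ) * m = 0 := by omega
        refine M2 β 0 hβ (by omega) oepos ?_ ?_ ?_ <;> simp [bf, bm]
    · obtain ⟨α, rfl⟩ := Nat.exists_eq_add_of_le haa
      obtain ⟨β, rfl⟩ := Nat.exists_eq_add_of_le hbb.le
      push_cast at hx hy
      have hβ : 0 < β := by omega
      have x0 : (β : ℤ) * f - α * e = g := by linarith
      have y0 : (β : ℤ) * m - α * l = h := by linarith
      obtain ⟨α', r1, r2, r3, r4, r5⟩ := reduce hd hn (e := f) (f := e) (l := m) (m := l) β α
        (x0 ▸ hg) (y0 ▸ hh)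
      exact M2 β α' hβ (by omega) r1 r2 r3 (by omega)
  · rcases le_or_gt b b' with hbb | hbb
    · obtain ⟨α, rfl⟩ := Nat.exists_eq_add_of_le haa.le
      obtain ⟨β, rfl⟩ := Nat.exists_eq_add_of_le hbb
      push_cast at hx hy
      have hα : 0 < α := by omega
      have x0 : (α : ℤ) * e - β * f = g := by linarith
      have y0 : (α : ℤ) * l - β * m = h := by linarith
      by_cases hz : g = 0 ∧ h = 0
      · rcases hne with hne | ⟨hb', hne⟩
        · exact hne hz
        · have hβ : 0 < β := by
            rcases Nat.eq_zero_or_pos β with rfl | hp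
            · exfalso
              rcases hel' with hp | hp
              · have : (0 : ℤ) < (α : ℤ) * e := by positivity
                simp at x0; omega
              · have : (0 : ℤ) < (α : ℤ) * l := by positivity
                simp at y0; omega
            · exact hp
          exact M23 α β hα (by omega) hβ (by omega) (x0 ▸ hg) (y0 ▸ hh)
      · exact M3 α β hα (by omega) (x0 ▸ hg) (y0 ▸ hh) (by omega) (by omega) (by omega)
    · obtain ⟨α, rfl⟩ := Nat.exists_eq_add_of_le haa.le
      obtain ⟨β, rfl⟩ := Nat.exists_eq_add_of_le hbb.le
      push_cast at hx hy
      have hα : 0 < α := by omega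
      have hβ : 0 < β := by omega
      have x0 : (α : ℤ) * e + β * f = g := by linarith
      have y0 : (α : ℤ) * l + β * m = h := by linarith
      rcases hB with ⟨hB1, hB2⟩ | ⟨hB1, hB2⟩
      · refine M23 (a2 + α) (b2 - β) (by omega) (by omega) (by omega) (by omega) ?_ ?_
        · have : ((a2 + α : ℕ) : ℤ) * e - (b2 - β : ℕ) * f = g - g2 := by
            rw [Nat.cast_sub (by omega)]; push_cast; linarith
          rw [this]; exact dvd_sub hg hdvd2.1
        · have : ((a2 + α : ℕ) : ℤ) * l - (b2 - β : ℕ) * m = h - h2 := by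
            rw [Nat.cast_sub (by omega)]; push_cast; linarith
          rw [this]; exact dvd_sub hh hdvd2.2
      · refine M23 (a3 - α) (b3 + β) (by omega) (by omega) (by omega) (by omega) ?_ ?_
        · have : ((a3 - α : ℕ) : ℤ) * e - (b3 + β : ℕ) * f = g3 - g := by
            rw [Nat.cast_sub (by omega)]; push_cast; linarith
          rw [this]; exact dvd_sub hdvd3.1 hg
        · have : ((a3 - α : ℕ) : ℤ) * l - (b3 + β : ℕ) * m = h3 - h := by
            rw [Nat.cast_sub (by omega)]; push_cast; linarith
          rw [this]; exact dvd_sub hdvd3.2 hh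

/-- The first assertion of the theorem. -/
lemma card_le {k : Type*} [Field k] {d n e f l m : ℕ} (hd : 0 < d) (hn : 0 < n)
    (R : Subalgebra k (MvPolynomial (Fin 2) k))
    (hR : R = Algebra.adjoin k
      ({X 0 ^ d, X 0 ^ e * X 1 ^ l, X 0 ^ f * X 1 ^ m, X 1 ^ n} :
        Set (MvPolynomial (Fin 2) k)))
    (xd yn : R)
    (hxd : (xd : MvPolynomial (Fin 2) k) = X 0 ^ d)
    (hyn : (yn : MvPolynomial (Fin 2) k) = X 1 ^ n)
    (u v : R)
    (hu : (u : MvPolynomial (Fin 2) k) = X 0 ^ e * X 1 ^ l)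
    (hv : (v : MvPolynomial (Fin 2) k) = X 0 ^ f * X 1 ^ m)
    (H : AddSubgroup (ZMod d × ZMod n))
    (hH : H = AddSubgroup.closure {((e : ZMod d), (l : ZMod n)), ((f : ZMod d), (m : ZMod n))}) :
    Nat.card H ≤ Module.finrank k (R ⧸ (Ideal.span {xd, yn} : Ideal R)) := by
  classical
  have : NeZero d := ⟨hd.ne'⟩
  have : NeZero n := ⟨hn.ne'⟩
  have hfin := fin_quot hd hn R hR xd yn hxd hyn
  have hex : ∀ x : H, ∃ N : ℕ, ∃ s : Fin 2 →₀ ℕ, InS d n e f l m s ∧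
      (((s 0 : ℕ) : ZMod d), ((s 1 : ℕ) : ZMod n)) = (x : ZMod d × ZMod n) ∧ s 0 + s 1 = N := by
    rintro ⟨x, hx⟩
    rw [hH, AddSubgroup.mem_closure_pair] at hx
    obtain ⟨p, q, rfl⟩ := hx
    have hdn : ((d * n : ℕ) : ℤ) ≠ 0 := by exact_mod_cast (Nat.mul_pos hd hn).ne'
    have hp : (((p % (d * n : ℕ)).toNat : ℕ) : ℤ) = p % (d * n : ℕ) :=
      Int.toNat_of_nonneg (Int.emod_nonneg _ hdn)
    have hq : (((q % (d * n : ℕ)).toNat : ℕ) : ℤ) = q % (d * n : ℕ) :=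
      Int.toNat_of_nonneg (Int.emod_nonneg _ hdn)
    have redd : ∀ z : ℤ, ((z % (d * n : ℕ) : ℤ) : ZMod d) = z := by
      intro z
      rw [Int.emod_def]; push_cast; simp
    have redn : ∀ z : ℤ, ((z % (d * n : ℕ) : ℤ) : ZMod n) = z := by
      intro z
      rw [Int.emod_def]; push_cast; simp
    have hpd : (((p % (d * n : ℕ)).toNat : ℕ) : ZMod d) = p := by
      rw [← Int.cast_natCast, hp, redd]
    have hpn : (((p % (d * n : ℕ)).toNat : ℕ) : ZMod n) = p := by
      rw [← Int.cast_natCast, hp, redn]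
    have hqd : (((q % (d * n : ℕ)).toNat : ℕ) : ZMod d) = q := by
      rw [← Int.cast_natCast, hq, redd]
    have hqn : (((q % (d * n : ℕ)).toNat : ℕ) : ZMod n) = q := by
      rw [← Int.cast_natCast, hq, redn]
    generalize (p % (d * n : ℕ)).toNat = P at *
    generalize (q % (d * n : ℕ)).toNat = Q at *
    refine ⟨_, Finsupp.single 0 (P * e + Q * f) + Finsupp.single 1 (P * l + Q * m),
      ⟨P, Q, 0, 0, by simp, by simp⟩, ?_, rfl⟩
    ext
    · simp [hpd, hqd]
    · simp [hpn, hqn]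
  choose s hS hcl hdeg using fun x => Nat.find_spec (hex x)
  have hmin : ∀ (x : H) (t : Fin 2 →₀ ℕ), InS d n e f l m t →
      (((t 0 : ℕ) : ZMod d), ((t 1 : ℕ) : ZMod n)) = (x : ZMod d × ZMod n) →
      s x 0 + s x 1 ≤ t 0 + t 1 := by
    intro x t h1 h2
    rw [hdeg]
    exact Nat.find_min' (hex x) ⟨t, h1, h2, rfl⟩
  have hr : ∀ x, ∃ r : R, (r : MvPolynomial (Fin 2) k) = monomial (s x) 1 := by
    intro x
    obtain ⟨a, b, i, j, p1, p2⟩ := hS x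
    refine ⟨u ^ a * v ^ b * xd ^ i * yn ^ j, ?_⟩
    have : s x = Finsupp.single 0 (s x 0) + Finsupp.single 1 (s x 1) := by
      ext t; fin_cases t <;> simp
    rw [this, ← mono_eq, p1, p2]
    simp only [MulMemClass.coe_mul, SubmonoidClass.coe_pow, hu, hv, hxd, hyn]
    ring
  choose r hr using hr
  have hli := indep R hR xd yn hxd hyn r s
    (by
      intro x y hxy
      apply Subtype.ext
      rw [← hcl x, ← hcl y, hxy]) hr
    (by
      intro x t ht heq
      have := hmin x t ht (by rw [← hcl x, heq]; simp)
      rw [heq] at this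
      simp at this
      omega)
    (by
      intro x t ht heq
      have := hmin x t ht (by rw [← hcl x, heq]; simp)
      rw [heq] at this
      simp at this
      omega)
  rw [Nat.card_eq_fintype_card]
  exact hli.fintype_card_le_finrank

/-- Let `R = k[x^d, x^e y^ℓ, x^f y^m, y^n]`.  Then `dim_k R/(x^d, y^n) ≥ |H|`, where `H` is
the subgroup of `(ℤ/d) ⊕ (ℤ/n)` generated by `(e,ℓ)` and `(f,m)`; indeed the `|H|` monomials
`x^{ae+bf} y^{aℓ+bm}` for `(a,b) ∈ B₀` are linearly independent in `R/(x^d, y^n)`. -/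
theorem stmt_11
    (d n e f l m : ℕ) (hd : 0 < d) (hn : 0 < n) (hel : (e, l) ≠ (0, 0))
    (a2 b2 a3 b3 : ℕ) (g2 h2 g3 h3 : ℤ)
    -- `b₂` is the smallest positive integer admitting a relation
    -- `-a₂(e,ℓ) + b₂(f,m) = (g₂,h₂) ∈ dℤ ⊕ nℤ` with `a₂ < ord((e,ℓ))` and
    -- `g₂ > 0` or `h₂ > 0` or `(g₂,h₂) = (0,0)`.
    (hb2pos : 0 < b2)
    (ha2ord : a2 < addOrderOf (((e : ZMod d), (l : ZMod n)) : ZMod d × ZMod n))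
    (hrel2x : -(a2 : ℤ) * e + b2 * f = g2) (hrel2y : -(a2 : ℤ) * l + b2 * m = h2)
    (hdvd2 : (d : ℤ) ∣ g2 ∧ (n : ℤ) ∣ h2)
    (hsign2 : 0 < g2 ∨ 0 < h2 ∨ (g2 = 0 ∧ h2 = 0))
    (hmin2 : ∀ b' : ℕ, 0 < b' →
      (∃ (a' : ℕ) (g h : ℤ), a' < addOrderOf (((e : ZMod d), (l : ZMod n)) : ZMod d × ZMod n) ∧
        -(a' : ℤ) * e + b' * f = g ∧ -(a' : ℤ) * l + b' * m = h ∧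
        (d : ℤ) ∣ g ∧ (n : ℤ) ∣ h ∧ (0 < g ∨ 0 < h ∨ (g = 0 ∧ h = 0))) → b2 ≤ b')
    -- `a₃` is the smallest positive integer admitting a relation
    -- `a₃(e,ℓ) - b₃(f,m) = (g₃,h₃) ∈ dℤ ⊕ nℤ` with `b₃ < ord((f,m))`,
    -- `g₃, h₃ ≥ 0` not both zero.
    (ha3pos : 0 < a3)
    (hb3ord : b3 < addOrderOf (((f : ZMod d), (m : ZMod n)) : ZMod d × ZMod n))
    (hrel3x : (a3 : ℤ) * e - b3 * f = g3) (hrel3y : (a3 : ℤ) * l - b3 * m = h3)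
    (hdvd3 : (d : ℤ) ∣ g3 ∧ (n : ℤ) ∣ h3)
    (hsign3 : 0 ≤ g3 ∧ 0 ≤ h3 ∧ ¬(g3 = 0 ∧ h3 = 0))
    (hmin3 : ∀ a' : ℕ, 0 < a' →
      (∃ (b' : ℕ) (g h : ℤ), b' < addOrderOf (((f : ZMod d), (m : ZMod n)) : ZMod d × ZMod n) ∧
        (a' : ℤ) * e - b' * f = g ∧ (a' : ℤ) * l - b' * m = h ∧
        (d : ℤ) ∣ g ∧ (n : ℤ) ∣ h ∧ 0 ≤ g ∧ 0 ≤ h ∧ ¬(g = 0 ∧ h = 0)) → a3 ≤ a')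
    (k : Type*) [Field k]
    (R : Subalgebra k (MvPolynomial (Fin 2) k))
    (hR : R = Algebra.adjoin k
      ({X 0 ^ d, X 0 ^ e * X 1 ^ l, X 0 ^ f * X 1 ^ m, X 1 ^ n} :
        Set (MvPolynomial (Fin 2) k)))
    (xd yn : R)
    (hxd : (xd : MvPolynomial (Fin 2) k) = X 0 ^ d)
    (hyn : (yn : MvPolynomial (Fin 2) k) = X 1 ^ n)
    (u v : R)
    (hu : (u : MvPolynomial (Fin 2) k) = X 0 ^ e * X 1 ^ l)
    (hv : (v : MvPolynomial (Fin 2) k) = X 0 ^ f * X 1 ^ m)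
    (H : AddSubgroup (ZMod d × ZMod n))
    (hH : H = AddSubgroup.closure {((e : ZMod d), (l : ZMod n)), ((f : ZMod d), (m : ZMod n))})
    (B0 : Set (ℕ × ℕ))
    (hB0 : B0 = {w : ℕ × ℕ | (w.1 < a3 - a2 ∧ w.2 < b2) ∨ (w.1 < a3 ∧ w.2 < b2 - b3)}) :
    Nat.card H ≤ Module.finrank k (R ⧸ (Ideal.span {xd, yn} : Ideal R)) ∧
    LinearIndependent k
      (fun w : B0 => Ideal.Quotient.mk (Ideal.span {xd, yn} : Ideal R)
        (u ^ (w : ℕ × ℕ).1 * v ^ (w : ℕ × ℕ).2)) := by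
  refine ⟨card_le hd hn R hR xd yn hxd hyn u v hu hv H hH, ?_⟩
  subst hB0
  have C := comb d n e f l m hd hn hel a2 b2 a3 b3 g2 h2 g3 h3 hrel2x hrel2y hdvd2 hmin2
    hrel3x hrel3y hdvd3 hmin3
  refine indep R hR xd yn hxd hyn _
    (fun w => Finsupp.single 0 (w.1.1 * e + w.1.2 * f) +
      Finsupp.single 1 (w.1.1 * l + w.1.2 * m)) ?_ ?_ ?_ ?_
  · rintro ⟨⟨a, b⟩, hw⟩ ⟨⟨a', b'⟩, hw'⟩ heq
    by_contra hne
    have hx := DFunLike.congr_fun heq 0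
    have hy := DFunLike.congr_fun heq 1
    simp at hx hy
    simp only [Set.mem_ofPred_eq] at hw hw'
    refine C a b a' b' 0 0 hw (by rw [add_zero]; exact_mod_cast hx)
      (by rw [add_zero]; exact_mod_cast hy) (dvd_zero _) (dvd_zero _) le_rfl le_rfl
      (Or.inr ⟨by omega, fun h => hne (Subtype.ext h)⟩)
  · intro w
    rw [← mono_eq]
    simp only [MulMemClass.coe_mul, SubmonoidClass.coe_pow, hu, hv]
    ring
  · rintro ⟨⟨a, b⟩, hw⟩ t ⟨a', b', i, j, p1, p2⟩ heq
    have hx := DFunLike.congr_fun heq 0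
    have hy := DFunLike.congr_fun heq 1
    simp [p1, p2] at hx hy
    refine C a b a' b' (i * d + d) (j * n) hw (by zify at hx; linarith) (by zify at hy; linarith)
      ⟨i + 1, by ring⟩ ⟨j, by ring⟩ (by positivity) (by positivity) (Or.inl ?_)
    rintro ⟨h, -⟩
    have : (0 : ℤ) < i * d + d := by positivity
    omega
  · rintro ⟨⟨a, b⟩, hw⟩ t ⟨a', b', i, j, p1, p2⟩ heq
    have hx := DFunLike.congr_fun heq 0
    have hy := DFunLike.congr_fun heq 1
    simp [p1, p2] at hx hy
    refine C a b a' b' (i * d) (j * n + n) hw (by zify at hx; linarith) (by zify at hy; linarith)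
      ⟨i, by ring⟩ ⟨j + 1, by ring⟩ (by positivity) (by positivity) (Or.inl ?_)
    rintro ⟨-, h⟩
    have : (0 : ℤ) < j * n + n := by positivity
    omega
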